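/- (Theorem 2: optimality of constrained systems.) Assume (feasibility) each per-column feasible set C_i, i = 1,…,Nx, is nonempty, and (rank condition) dim (K_1 + K_2 + … + K_{Nx}) = dim S(0). Then for Lebesgue-almost every x0 ∈ ℝ^{Nx}, the constrained and unconstrained feasible sets coincide: T(x0) = S(x0); indeed equality holds for every x0 all of whose coordinates are nonzero. -/

import Mathlib

open Matrix Finset MeasureTheory

/-!
Fix one trajectory `cᵢ ∈ Cᵢ` per column. The trajectory `∑ x₀ᵢ cᵢ` starts at `x₀`, so any
`s ∈ S(x₀)` differs from it by an element of `S(0)`. The rank condition forces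
`S(0) = K₁ + ⋯ + K_{Nx}`, and the summands of that difference can be absorbed into the `cᵢ` after
division by `x₀ᵢ`, which is possible as soon as no coordinate of `x₀` vanishes. The exceptional
`x₀` lie on finitely many coordinate hyperplanes, a null set.
-/

section LinearFibers

variable {𝕜 V ι : Type*} [Ring 𝕜] [AddCommGroup V] [Module 𝕜 V]

/-- The feasible set `S(x₀)`: the trajectories in the subspace `W` cut out by the dynamics whose
initial state, read off by `init`, is `x₀`. -/
def feasibleSet (W : Submodule 𝕜 V) (init : V →ₗ[𝕜] ι → 𝕜) (x₀ : ι → 𝕜) : Set V :=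
  {s | init s = x₀ ∧ s ∈ W}

/-- The direction space `Kᵢ` of a column subject to the linear constraint `s ∈ Z`. -/
def constrainedDirections (W : Submodule 𝕜 V) (init : V →ₗ[𝕜] ι → 𝕜) (Z : Submodule 𝕜 V) :
    Submodule 𝕜 V :=
  LinearMap.ker init ⊓ W ⊓ Z

/-- The per-column feasible set `Cᵢ`, with the support constraint of column `i` replaced by
membership in an arbitrary subspace `Z i`. -/
def columnFeasibleSet [DecidableEq ι] (W : Submodule 𝕜 V) (init : V →ₗ[𝕜] ι → 𝕜)
    (Z : ι → Submodule 𝕜 V) (i : ι) : Set V :=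
  {s ∈ feasibleSet W init (Pi.single i 1) | s ∈ Z i}

/-- The constrained feasible set `T(x₀)` of superpositions `∑ x₀ᵢ fᵢ` with `fᵢ ∈ Cᵢ`. -/
def constrainedFeasibleSet [Fintype ι] [DecidableEq ι] (W : Submodule 𝕜 V)
    (init : V →ₗ[𝕜] ι → 𝕜) (Z : ι → Submodule 𝕜 V) (x₀ : ι → 𝕜) : Set V :=
  {s | ∃ f : ι → V, (∀ i, f i ∈ columnFeasibleSet W init Z i) ∧ s = ∑ i, x₀ i • f i}

variable {W : Submodule 𝕜 V} {init : V →ₗ[𝕜] ι → 𝕜}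

theorem sub_mem_ker_inf_of_mem_feasibleSet {x₀ : ι → 𝕜} {s s' : V}
    (hs : s ∈ feasibleSet W init x₀) (hs' : s' ∈ feasibleSet W init x₀) :
    s - s' ∈ LinearMap.ker init ⊓ W :=
  ⟨by simp [hs.1, hs'.1], W.sub_mem hs.2 hs'.2⟩

variable [DecidableEq ι] {Z : ι → Submodule 𝕜 V}

theorem add_mem_columnFeasibleSet {i : ι} {c k : V} (hc : c ∈ columnFeasibleSet W init Z i)
    (hk : k ∈ constrainedDirections W init (Z i)) : c + k ∈ columnFeasibleSet W init Z i := by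
  obtain ⟨⟨hc_init, hcW⟩, hcZ⟩ := hc
  obtain ⟨⟨hk_init, hkW⟩, hkZ⟩ := hk
  refine ⟨⟨?_, W.add_mem hcW hkW⟩, (Z i).add_mem hcZ hkZ⟩
  rw [map_add, hc_init, LinearMap.mem_ker.1 hk_init, add_zero]

variable [Fintype ι]

theorem constrainedFeasibleSet_subset_feasibleSet (x₀ : ι → 𝕜) :
    constrainedFeasibleSet W init Z x₀ ⊆ feasibleSet W init x₀ := by
  rintro _ ⟨f, hf, rfl⟩
  refine ⟨?_, W.sum_mem fun i _ => W.smul_mem _ (hf i).1.2⟩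
  simp only [map_sum, map_smul, (hf _).1.1, ← pi_eq_sum_univ']

end LinearFibers

section RankCondition

variable {𝕜 V ι κ : Type*} [DivisionRing 𝕜] [AddCommGroup V] [Module 𝕜 V] [FiniteDimensional 𝕜 V]

theorem ker_inf_le_iSup_constrainedDirections_of_finrank_eq {W : Submodule 𝕜 V}
    {init : V →ₗ[𝕜] ι → 𝕜} {Z : κ → Submodule 𝕜 V}
    (hrank : Module.finrank 𝕜
        (Submodule.span 𝕜 (⋃ i, (constrainedDirections W init (Z i) : Set V))) =
      Module.finrank 𝕜 (Submodule.span 𝕜 (feasibleSet W init 0))) :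
    LinearMap.ker init ⊓ W ≤ ⨆ i, constrainedDirections W init (Z i) := by
  have hspan_feasible : Submodule.span 𝕜 (feasibleSet W init 0) = LinearMap.ker init ⊓ W :=
    Submodule.span_eq (LinearMap.ker init ⊓ W)
  have hspan_constrained :
      Submodule.span 𝕜 (⋃ i, (constrainedDirections W init (Z i) : Set V)) =
        ⨆ i, constrainedDirections W init (Z i) := by
    simp only [Submodule.span_iUnion, Submodule.span_eq]
  rw [hspan_feasible, hspan_constrained] at hrank
  exact (Submodule.eq_of_le_of_finrank_eq (iSup_le fun _ => inf_le_left) hrank).ge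

end RankCondition

section Absorption

variable {𝕜 V ι : Type*} [DivisionRing 𝕜] [AddCommGroup V] [Module 𝕜 V] [Fintype ι]

theorem exists_eq_sum_smul_add_of_sub_mem_iSup {K : ι → Submodule 𝕜 V} {x : ι → 𝕜}
    (hx : ∀ i, x i ≠ 0) {c : ι → V} {s : V} (hs : s - ∑ i, x i • c i ∈ ⨆ i, K i) :
    ∃ k : ι → V, (∀ i, k i ∈ K i) ∧ s = ∑ i, x i • (c i + k i) := by
  obtain ⟨k, hk⟩ : ∃ k : ∀ i, K i, ∑ i, (k i : V) = s - ∑ i, x i • c i := by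
    simpa using (Submodule.mem_iSup_finset_iff_exists_sum (s := univ) K _).1 (by simpa using hs)
  refine ⟨fun i => (x i)⁻¹ • (k i : V), fun i => (K i).smul_mem _ (k i).2, ?_⟩
  simp only [smul_add, smul_inv_smul₀ (hx _), sum_add_distrib, hk, add_sub_cancel]

variable [DecidableEq ι] {W : Submodule 𝕜 V} {init : V →ₗ[𝕜] ι → 𝕜} {Z : ι → Submodule 𝕜 V}

theorem constrainedFeasibleSet_eq_feasibleSet
    (hne : ∀ i, (columnFeasibleSet W init Z i).Nonempty)
    (hdir : LinearMap.ker init ⊓ W ≤ ⨆ i, constrainedDirections W init (Z i))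
    {x₀ : ι → 𝕜} (hx₀ : ∀ i, x₀ i ≠ 0) :
    constrainedFeasibleSet W init Z x₀ = feasibleSet W init x₀ := by
  refine (constrainedFeasibleSet_subset_feasibleSet x₀).antisymm fun s hs => ?_
  choose c hc using hne
  have hcs : ∑ i, x₀ i • c i ∈ feasibleSet W init x₀ :=
    constrainedFeasibleSet_subset_feasibleSet x₀ ⟨c, hc, rfl⟩
  obtain ⟨k, hk, hsk⟩ :=
    exists_eq_sum_smul_add_of_sub_mem_iSup hx₀ (hdir (sub_mem_ker_inf_of_mem_feasibleSet hs hcs))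
  exact ⟨fun i => c i + k i, fun i => add_mem_columnFeasibleSet (hc i) (hk i), hsk⟩

theorem optimality_of_constrained_systems_general [MeasurableSpace 𝕜] (μ : ι → Measure 𝕜)
    [∀ i, SigmaFinite (μ i)] [∀ i, NullSingletonClass (μ i)]
    (hne : ∀ i, (columnFeasibleSet W init Z i).Nonempty)
    (hdir : LinearMap.ker init ⊓ W ≤ ⨆ i, constrainedDirections W init (Z i)) :
    (∀ x₀ : ι → 𝕜, (∀ i, x₀ i ≠ 0) →
      constrainedFeasibleSet W init Z x₀ = feasibleSet W init x₀) ∧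
    (∀ᵐ x₀ ∂Measure.pi μ, constrainedFeasibleSet W init Z x₀ = feasibleSet W init x₀) := by
  have heq (x₀ : ι → 𝕜) (hx₀ : ∀ i, x₀ i ≠ 0) :
      constrainedFeasibleSet W init Z x₀ = feasibleSet W init x₀ :=
    constrainedFeasibleSet_eq_feasibleSet hne hdir hx₀
  have hae : ∀ᵐ x₀ ∂Measure.pi μ, ∀ i, x₀ i ≠ 0 :=
    ae_all_iff.2 fun i => Measure.ae_eval_ne μ i 0
  exact ⟨heq, hae.mono heq⟩

end Absorption

section StateSpaceSystem

variable {𝕜 m n : Type*} [CommRing 𝕜] {T : ℕ}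

/-- The pairs `(x, u)` of length `T` that obey `x(t+1) = A x(t) + B u(t)` and are steered to the
origin at time `T`, whatever their initial state. -/
def systemTrajectories [Fintype m] [Fintype n] (hT : 1 ≤ T) (A : Matrix n n 𝕜)
    (B : Matrix n m 𝕜) : Submodule 𝕜 ((Fin T → n → 𝕜) × (Fin T → m → 𝕜)) where
  carrier := {su |
    (∀ t : ℕ, (ht : t + 1 < T) →
      su.1 ⟨t + 1, ht⟩ =
        A *ᵥ su.1 ⟨t, Nat.lt_of_succ_lt ht⟩ + B *ᵥ su.2 ⟨t, Nat.lt_of_succ_lt ht⟩) ∧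
    A *ᵥ su.1 ⟨T - 1, Nat.sub_one_lt_of_lt hT⟩ + B *ᵥ su.2 ⟨T - 1, Nat.sub_one_lt_of_lt hT⟩ = 0}
  zero_mem' := by simp
  add_mem' {s s'} hs hs' := by
    refine ⟨fun t ht => ?_, ?_⟩
    · simp only [Prod.fst_add, Prod.snd_add, Pi.add_apply, mulVec_add, hs.1 t ht, hs'.1 t ht,
        add_add_add_comm]
    · simp only [Prod.fst_add, Prod.snd_add, Pi.add_apply, mulVec_add]
      rw [add_add_add_comm, hs.2, hs'.2, add_zero]
  smul_mem' a s hs := by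
    refine ⟨fun t ht => ?_, ?_⟩
    · simp only [Prod.smul_fst, Prod.smul_snd, Pi.smul_apply, mulVec_smul, hs.1 t ht, smul_add]
    · simp only [Prod.smul_fst, Prod.smul_snd, Pi.smul_apply, mulVec_smul]
      rw [← smul_add, hs.2, smul_zero]

/-- The initial state `x(0)` of a trajectory `(x, u)`. -/
def initialState (hT : 1 ≤ T) : (Fin T → n → 𝕜) × (Fin T → m → 𝕜) →ₗ[𝕜] n → 𝕜 :=
  LinearMap.proj ⟨0, hT⟩ ∘ₗ LinearMap.fst 𝕜 _ _

/-- The scalar coordinates of a trajectory, those of the states on the left of the disjoint sum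
and those of the inputs on the right. -/
def trajectoryCoord :
    (Fin T → n → 𝕜) × (Fin T → m → 𝕜) →ₗ[𝕜] (Fin T × n) ⊕ (Fin T × m) → 𝕜 where
  toFun su := Sum.elim (fun p => su.1 p.1 p.2) (fun p => su.2 p.1 p.2)
  map_add' s s' := by ext (p | p) <;> rfl
  map_smul' a s := by ext (p | p) <;> rfl

/-- The support constraint given by `R`: the trajectories whose coordinates in `R` are zero. -/
def vanishingSubspace (R : Set ((Fin T × n) ⊕ (Fin T × m))) :
    Submodule 𝕜 ((Fin T → n → 𝕜) × (Fin T → m → 𝕜)) where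
  carrier := {s | ∀ c ∈ R, trajectoryCoord s c = 0}
  zero_mem' := by simp
  add_mem' hs hs' c hc := by simp [hs c hc, hs' c hc]
  smul_mem' a s hs c hc := by simp [hs c hc]

end StateSpaceSystem

/-- Theorem 2, optimality of constrained systems: if each per-column
feasible set `C_i` is nonempty and `dim (K_1 + … + K_{Nx}) = dim S(0)`, then
`T(x0) = S(x0)` for every `x0` with all coordinates nonzero, hence for Lebesgue-almost
every `x0`. -/
theorem optimality_of_constrained_systems {Nx Nu T : ℕ} (hT : 1 ≤ T)
    (A : Matrix (Fin Nx) (Fin Nx) ℝ) (B : Matrix (Fin Nx) (Fin Nu) ℝ)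
    (S : (Fin Nx → ℝ) → Set ((Fin T → Fin Nx → ℝ) × (Fin T → Fin Nu → ℝ)))
    (hS : ∀ x0 : Fin Nx → ℝ, S x0 = { su |
        su.1 ⟨0, by omega⟩ = x0 ∧
        (∀ t : ℕ, (ht : t + 1 < T) →
          su.1 ⟨t + 1, ht⟩ =
            A.mulVec (su.1 ⟨t, by omega⟩) + B.mulVec (su.2 ⟨t, by omega⟩)) ∧
        A.mulVec (su.1 ⟨T - 1, by omega⟩) + B.mulVec (su.2 ⟨T - 1, by omega⟩) = 0 })
    (R : Fin Nx → Set ((Fin T × Fin Nx) ⊕ (Fin T × Fin Nu)))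
    (coord : ((Fin T → Fin Nx → ℝ) × (Fin T → Fin Nu → ℝ)) →
      ((Fin T × Fin Nx) ⊕ (Fin T × Fin Nu)) → ℝ)
    (hcoord : ∀ su c, coord su c =
      Sum.elim (fun p : Fin T × Fin Nx => su.1 p.1 p.2)
        (fun p : Fin T × Fin Nu => su.2 p.1 p.2) c)
    (C : Fin Nx → Set ((Fin T → Fin Nx → ℝ) × (Fin T → Fin Nu → ℝ)))
    (hC : ∀ i, C i = { s ∈ S (Pi.single i 1) | ∀ c ∈ R i, coord s c = 0 })
    (K : Fin Nx → Set ((Fin T → Fin Nx → ℝ) × (Fin T → Fin Nu → ℝ)))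
    (hK : ∀ i, K i = { k ∈ S 0 | ∀ c ∈ R i, coord k c = 0 })
    (Tset : (Fin Nx → ℝ) → Set ((Fin T → Fin Nx → ℝ) × (Fin T → Fin Nu → ℝ)))
    (hTset : ∀ x0 : Fin Nx → ℝ, Tset x0 = { s |
        ∃ f : Fin Nx → (Fin T → Fin Nx → ℝ) × (Fin T → Fin Nu → ℝ),
          (∀ i, f i ∈ C i) ∧ s = ∑ i : Fin Nx, x0 i • f i })
    (hCne : ∀ i, (C i).Nonempty)
    (hrank : Module.finrank ℝ (Submodule.span ℝ (⋃ i : Fin Nx, K i))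
      = Module.finrank ℝ (Submodule.span ℝ (S 0))) :
    (∀ x0 : Fin Nx → ℝ, (∀ i, x0 i ≠ 0) → Tset x0 = S x0) ∧
    (∀ᵐ x0 : Fin Nx → ℝ, Tset x0 = S x0) := by
  obtain rfl : S = feasibleSet (systemTrajectories hT A B) (initialState hT) := funext hS
  obtain rfl : coord = fun su => trajectoryCoord su := funext₂ hcoord
  obtain rfl : C = columnFeasibleSet (systemTrajectories hT A B) (initialState hT)
      (fun i => vanishingSubspace (R i)) := funext hC
  obtain rfl : K = fun i => ↑(constrainedDirections (systemTrajectories hT A B) (initialState hT)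
      (vanishingSubspace (R i))) := funext hK
  obtain rfl : Tset = constrainedFeasibleSet (systemTrajectories hT A B) (initialState hT)
      (fun i => vanishingSubspace (R i)) := funext hTset
  exact optimality_of_constrained_systems_general (fun _ => volume) hCne
    (ker_inf_le_iSup_constrainedDirections_of_finrank_eq hrank)
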